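/- Let ω : ℝ³ → ℝ³ be a smooth, compactly supported, divergence-free vector field, and let V(x) = −(1/4π) ∫_{ℝ³} ((x − x′) × ω(x′))/‖x − x′‖³ dx′ be the associated Biot–Savart velocity field. Then V is square-integrable and the kinetic energy admits the double-integral representation (1/2) ∫_{ℝ³} ‖V(x)‖² dx = (1/8π) ∫_{ℝ³} ∫_{ℝ³} (ω(x) · ω(x′))/‖x − x′‖ dx′ dx. -/

import Mathlib

open MeasureTheory Real

/-- The cross product on `ℝ³`. -/
noncomputable def cross3 (a b : EuclideanSpace ℝ (Fin 3)) : EuclideanSpace ℝ (Fin 3) :=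
  (WithLp.equiv 2 (Fin 3 → ℝ)).symm
    ![a 1 * b 2 - a 2 * b 1, a 2 * b 0 - a 0 * b 2, a 0 * b 1 - a 1 * b 0]

/-- The divergence `∇ · V` of a vector field on `ℝ³`. -/
noncomputable def div3 (V : EuclideanSpace ℝ (Fin 3) → EuclideanSpace ℝ (Fin 3))
    (x : EuclideanSpace ℝ (Fin 3)) : ℝ :=
  ∑ i : Fin 3, fderiv ℝ V x (EuclideanSpace.single i (1 : ℝ)) i

abbrev E3 := EuclideanSpace ℝ (Fin 3)

noncomputable def KK (z : E3) : E3 := (‖z‖ ^ 3)⁻¹ • z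

lemma KK_norm (z : E3) : ‖KK z‖ = (‖z‖ ^ 2)⁻¹ := by
  unfold KK
  rw [norm_smul, norm_inv, norm_pow, norm_norm]
  by_cases h : ‖z‖ = 0
  · simp [h]
  · field_simp

lemma KK_neg (z : E3) : KK (-z) = -KK z := by simp [KK]

lemma KK_meas : Measurable KK := by unfold KK; fun_prop

lemma polarE (g : E3 → ℝ) (hg : Integrable g) :
    (∀ᵐ θ : Metric.sphere (0:E3) 1 ∂((volume : Measure E3).toSphere),
      IntegrableOn (fun r : ℝ => r ^ 2 * g (r • (θ : E3))) (Set.Ioi 0)) ∧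
    ∫ x, g x = ∫ θ, (∫ r in Set.Ioi (0:ℝ), r ^ 2 * g (r • (θ : E3)))
      ∂((volume : Measure E3).toSphere) := by
  have hdim : Module.finrank ℝ E3 - 1 = 2 := by simp
  have hmp := (volume : Measure E3).measurePreserving_homeomorphUnitSphereProd
  rw [hdim] at hmp
  have hemb := (homeomorphUnitSphereProd E3).measurableEmbedding
  let G : (Metric.sphere (0:E3) 1) × (Set.Ioi (0:ℝ)) → ℝ := fun p => g ((p.2 : ℝ) • (p.1 : E3))
  have hG : ∀ x, G (homeomorphUnitSphereProd E3 x) = g x := by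
    intro x
    have : ‖(x : E3)‖ ≠ 0 := norm_ne_zero_iff.2 x.2
    simp [G, homeomorphUnitSphereProd, smul_smul, this]
  have hint : Integrable G ((volume : Measure E3).toSphere.prod (Measure.volumeIoiPow 2)) := by
    rw [← hmp.integrable_comp_emb hemb]
    have : G ∘ (homeomorphUnitSphereProd E3) = g ∘ (Subtype.val) := by
      funext x; exact hG x
    rw [this, ← integrableOn_iff_comap_subtypeVal (measurableSet_singleton _).compl]
    exact hg.integrableOn
  have key1 : ∀ f : ℝ → ℝ, Integrable (fun r : Set.Ioi (0:ℝ) => f r) (Measure.volumeIoiPow 2) ↔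
      IntegrableOn (fun r : ℝ => r ^ 2 * f r) (Set.Ioi 0) := by
    intro f
    rw [integrableOn_iff_comap_subtypeVal measurableSet_Ioi, Measure.volumeIoiPow,
      integrable_withDensity_iff_integrable_smul']
    · refine integrable_congr (.of_forall ?_)
      rintro ⟨x, hx : 0 < x⟩
      simp (disch := positivity) [ENNReal.toReal_ofReal]
    · fun_prop
    · simp
  have key2 : ∀ f : ℝ → ℝ, ∫ r : Set.Ioi (0:ℝ), f r ∂(Measure.volumeIoiPow 2) =
      ∫ r in Set.Ioi (0:ℝ), r ^ 2 * f r := by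
    intro f
    simp only [Measure.volumeIoiPow, ENNReal.ofReal]
    rw [integral_withDensity_eq_integral_smul,
        integral_subtype_comap measurableSet_Ioi fun a ↦ Real.toNNReal (a ^ 2) • f a,
        setIntegral_congr_fun measurableSet_Ioi fun x hx ↦ ?_]
    · rw [NNReal.smul_def, Real.coe_toNNReal _ (pow_nonneg hx.out.le _), smul_eq_mul]
    · exact (measurable_subtype_coe.pow_const _).real_toNNReal
  constructor
  · filter_upwards [hint.prod_right_ae] with θ hθ
    exact (key1 (fun r => g (r • (θ : E3)))).1 hθ
  · calc ∫ x, g x = ∫ x : ({(0)}ᶜ : Set E3), g x.1 ∂(Measure.comap Subtype.val volume) := by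
          rw [integral_subtype_comap (measurableSet_singleton _).compl g,
            restrict_compl_singleton]
      _ = ∫ p, G p ∂((volume : Measure E3).toSphere.prod (Measure.volumeIoiPow 2)) := by
          rw [← hmp.integral_comp hemb]
          simp only [hG]
      _ = _ := by
          rw [integral_prod _ hint]
          refine integral_congr_ae (.of_forall fun θ => ?_)
          exact key2 (fun r => g (r • (θ : E3)))

lemma sphere_null (d : E3) :
    ∀ᵐ θ : Metric.sphere (0:E3) 1 ∂((volume : Measure E3).toSphere), (θ : E3) ∉ Submodule.span ℝ {d} := by
  rw [ae_iff]
  simp only [not_not]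
  have hm : MeasurableSet {θ : Metric.sphere (0:E3) 1 | (θ : E3) ∈ Submodule.span ℝ {d}} := by
    have : MeasurableSet ((Submodule.span ℝ {d} : Submodule ℝ E3) : Set E3) :=
      (Submodule.closed_of_finiteDimensional _).measurableSet
    exact measurable_subtype_coe this
  rw [Measure.toSphere_apply' _ hm]
  have : (volume : Measure E3) ((Submodule.span ℝ {d} : Submodule ℝ E3) : Set E3) = 0 := by
    apply Measure.addHaar_submodule
    intro h
    have h1 : Module.finrank ℝ (Submodule.span ℝ {d} : Submodule ℝ E3) ≤ 1 := by
      simpa using finrank_span_le_card (R := ℝ) ({d} : Set E3)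
    rw [h, finrank_top] at h1
    simp at h1
  rw [measure_mono_null _ this, mul_zero]
  rintro _ ⟨r, _, _, ⟨θ, hθ, rfl⟩, rfl⟩
  exact Submodule.smul_mem _ _ hθ

lemma line_deriv (θ d : E3) (r : ℝ) (h : r • θ + d ≠ 0) :
    HasDerivAt (fun r : ℝ => -(‖r • θ + d‖)⁻¹) (inner ℝ θ (KK (r • θ + d))) r := by
  have h0 : HasDerivAt (fun r : ℝ => r • θ + d) θ r := by
    simpa using ((hasDerivAt_id r).smul_const θ).add_const d
  have h1 := h0.norm_sq
  have hn : ‖r • θ + d‖ ≠ 0 := norm_ne_zero_iff.2 h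
  have h2 := ((h1.sqrt (by positivity)).inv (by simpa using hn)).neg
  simp only [Real.sqrt_sq (norm_nonneg _)] at h2
  have h3 : (inner ℝ θ (KK (r • θ + d)) : ℝ) =
      -(-(2 * inner ℝ (r • θ + d) θ / (2 * ‖r • θ + d‖)) / ‖r • θ + d‖ ^ 2) := by
    rw [KK, inner_smul_right, real_inner_comm]
    field_simp
  rw [h3]
  exact h2

lemma KK_int (d : E3) (hd : d ≠ 0)
    (hint : Integrable (fun x => (inner ℝ (KK x) (KK (x + d)) : ℝ))) :
    ∫ x, (inner ℝ (KK x) (KK (x + d)) : ℝ) = 4 * π / ‖d‖ := by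
  obtain ⟨h1, h2⟩ := polarE _ hint
  rw [h2]
  have : ∀ᵐ θ : Metric.sphere (0:E3) 1 ∂((volume : Measure E3).toSphere),
    (∫ r in Set.Ioi (0:ℝ), r ^ 2 * (inner ℝ (KK (r • (θ : E3))) (KK (r • (θ : E3) + d)) : ℝ))
      = ‖d‖⁻¹ := by
    filter_upwards [h1, sphere_null d] with θ hθ hθ2
    have hθ1 : ‖(θ : E3)‖ = 1 := by simp
    have hpt : ∀ r ∈ Set.Ioi (0:ℝ),
      r ^ 2 * (inner ℝ (KK (r • (θ : E3))) (KK (r • (θ : E3) + d)) : ℝ) =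
        inner ℝ (θ : E3) (KK (r • (θ : E3) + d)) := by
      intro r hr
      have hr : 0 < r := hr
      conv_lhs => rw [KK, norm_smul, hθ1, smul_smul, inner_smul_left]
      simp only [Real.norm_eq_abs, abs_of_pos hr]
      simp
      field_simp
    have hne : ∀ r : ℝ, r • (θ : E3) + d ≠ 0 := by
      intro r h
      have hr : r ≠ 0 := by
        rintro rfl
        simp at h; exact hd h
      apply hθ2
      have : (θ : E3) = (-r⁻¹) • d := by
        rw [eq_neg_of_add_eq_zero_right h]
        simp [smul_smul, hr]
      rw [this]
      exact Submodule.smul_mem _ _ (Submodule.mem_span_singleton_self d)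
    rw [setIntegral_congr_fun measurableSet_Ioi hpt]
    have hI := hθ.congr_fun hpt measurableSet_Ioi
    have ht : Filter.Tendsto (fun r : ℝ => -(‖r • (θ : E3) + d‖)⁻¹) Filter.atTop (nhds 0) := by
      suffices h : Filter.Tendsto (fun r : ℝ => (‖r • (θ : E3) + d‖)⁻¹) Filter.atTop (nhds 0) by
        simpa using h.neg
      apply Filter.Tendsto.inv_tendsto_atTop
      refine Filter.tendsto_atTop_mono (f := fun r : ℝ => r - ‖d‖) ?_ ?_
      · intro r
        have := norm_sub_norm_le (r • (θ : E3)) (-d)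
        rw [norm_smul, hθ1, norm_neg, sub_neg_eq_add] at this
        have h3 := le_abs_self r
        simp only [Real.norm_eq_abs] at this
        linarith
      · exact Filter.tendsto_atTop_add_const_right _ _ Filter.tendsto_id
    rw [integral_Ioi_of_hasDerivAt_of_tendsto' (fun r _ => line_deriv θ d r (hne r)) hI ht]
    simp
  rw [integral_congr_ae this, integral_const, Measure.toSphere_real_apply_univ]
  simp [Measure.real]
  rw [ENNReal.toReal_ofReal (by positivity)]
  field_simp

noncomputable def hh (z : E3) : ℝ := (Metric.ball (0:E3) 1).indicator (fun z => (‖z‖ ^ 2)⁻¹) z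

lemma hh_int : Integrable hh := by
  unfold hh
  rw [integrable_indicator_iff measurableSet_ball,
    integrableOn_fun_norm_addHaar (μ := (volume : Measure E3)) (f := fun r : ℝ => (r ^ 2)⁻¹)]
  have : IntegrableOn (fun _ : ℝ => (1:ℝ)) (Set.Ioo 0 1) := by
    simp
  refine this.congr_fun (fun r hr => ?_) measurableSet_Ioo
  have : r ≠ 0 := hr.1.ne'
  simp [this]

lemma hh_nonneg (z : E3) : 0 ≤ hh z := by
  unfold hh
  exact Set.indicator_nonneg (fun _ _ => by positivity) _

lemma KK_le (z : E3) : ‖KK z‖ ≤ hh z + 1 := by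
  rw [KK_norm]
  unfold hh
  by_cases h : z ∈ Metric.ball (0:E3) 1
  · rw [Set.indicator_of_mem h]; linarith
  · rw [Set.indicator_of_notMem h, zero_add]
    have : 1 ≤ ‖z‖ := by simpa using h
    exact inv_le_one_of_one_le₀ (one_le_pow₀ this)

lemma KK_le2 (z : E3) : (1 + ‖z‖ ^ 2) * ‖KK z‖ ≤ hh z + 2 := by
  have h1 := KK_le z
  have : ‖z‖ ^ 2 * ‖KK z‖ ≤ 1 := by
    rw [KK_norm]; exact mul_inv_le_one
  linarith

lemma Kw_int (ω : E3 → E3) (hc : Continuous ω) (hs : HasCompactSupport ω) (x : E3) :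
    Integrable (fun y => ‖KK (x - y)‖ * ‖ω y‖) := by
  obtain ⟨M, hM⟩ := hc.bounded_above_of_compact_support hs
  have hw : Integrable ω := hc.integrable_of_hasCompactSupport hs
  refine Integrable.mono' (g := fun y => M * hh (x - y) + ‖ω y‖)
    (((hh_int.comp_sub_left x).const_mul M).add hw.norm) ?_ (.of_forall fun y => ?_)
  · exact ((KK_meas.comp (measurable_const.sub measurable_id)).norm.mul
      hc.measurable.norm).aestronglyMeasurable
  · rw [Real.norm_of_nonneg (by positivity)]
    calc _ ≤ (hh (x - y) + 1) * ‖ω y‖ := by gcongr; exact KK_le _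
      _ = hh (x - y) * ‖ω y‖ + ‖ω y‖ := by ring
      _ ≤ hh (x - y) * M + ‖ω y‖ := by gcongr; exacts [hh_nonneg _, hM y]
      _ = _ := by ring

lemma Kw_bound (ω : E3 → E3) (hc : Continuous ω) (hs : HasCompactSupport ω) :
    ∃ C, ∀ x, ∫ y, ‖KK (x - y)‖ * ‖ω y‖ ≤ C * (1 + ‖x‖ ^ 2)⁻¹ := by
  obtain ⟨M, hM⟩ := hc.bounded_above_of_compact_support hs
  have hw : Integrable ω := hc.integrable_of_hasCompactSupport hs
  obtain ⟨R, hR⟩ := hs.isCompact.isBounded.exists_norm_le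
  refine ⟨2 * (1 + R ^ 2) * ((M * ∫ z, hh z) + 2 * ∫ y, ‖ω y‖), fun x => ?_⟩
  rw [← div_eq_mul_inv, le_div_iff₀ (by positivity), mul_comm, ← integral_const_mul]
  have e : ∫ y, 2 * (1 + R ^ 2) * (M * hh (x - y) + 2 * ‖ω y‖) =
      2 * (1 + R ^ 2) * ((M * ∫ z, hh z) + 2 * ∫ y, ‖ω y‖) := by
    rw [integral_const_mul, integral_add ((hh_int.comp_sub_left x).const_mul M)
      (hw.norm.const_mul 2), integral_const_mul, integral_const_mul,
      integral_sub_left_eq_self hh volume x]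
  refine le_trans (integral_mono ((Kw_int ω hc hs x).const_mul _)
    ((((hh_int.comp_sub_left x).const_mul M).add
      (hw.norm.const_mul 2)).const_mul (2 * (1 + R ^ 2))) ?_) (le_of_eq e)
  intro y
  simp only [Pi.add_apply]
  by_cases hy : y ∈ tsupport ω
  · have h1 : ‖y‖ ≤ R := hR y hy
    have h2 : ‖x‖ ≤ ‖x - y‖ + ‖y‖ := by simpa using norm_add_le (x - y) y
    have h3 : 1 + ‖x‖ ^ 2 ≤ 2 * (1 + R ^ 2) * (1 + ‖x - y‖ ^ 2) := by
      have a1 : ‖x‖ ^ 2 ≤ (‖x - y‖ + ‖y‖) ^ 2 := by gcongr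
      have a2 : ‖y‖ ^ 2 ≤ R ^ 2 := by gcongr
      nlinarith [sq_nonneg (‖x - y‖ - ‖y‖), mul_nonneg (sq_nonneg R) (sq_nonneg (‖x - y‖))]
    calc (1 + ‖x‖ ^ 2) * (‖KK (x - y)‖ * ‖ω y‖)
        ≤ (2 * (1 + R ^ 2) * (1 + ‖x - y‖ ^ 2)) * (‖KK (x - y)‖ * ‖ω y‖) := by gcongr
      _ = 2 * (1 + R ^ 2) * (((1 + ‖x - y‖ ^ 2) * ‖KK (x - y)‖) * ‖ω y‖) := by ring
      _ ≤ 2 * (1 + R ^ 2) * ((hh (x - y) + 2) * ‖ω y‖) := by gcongr; exact KK_le2 _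
      _ = 2 * (1 + R ^ 2) * (hh (x - y) * ‖ω y‖ + 2 * ‖ω y‖) := by ring
      _ ≤ 2 * (1 + R ^ 2) * (hh (x - y) * M + 2 * ‖ω y‖) := by
          gcongr; exacts [hh_nonneg _, hM y]
      _ = _ := by ring
  · have h0 : ω y = 0 := image_eq_zero_of_notMem_tsupport hy
    have hM0 : 0 ≤ M := le_trans (norm_nonneg _) (hM y)
    have := hh_nonneg (x - y)
    simp only [h0, norm_zero, mul_zero, add_zero]
    positivity

lemma triple_int (ω : E3 → E3) (hc : Continuous ω) (hs : HasCompactSupport ω) :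
    Integrable (fun p : E3 × (E3 × E3) =>
      (‖KK (p.1 - p.2.1)‖ * ‖ω p.2.1‖) * (‖KK (p.1 - p.2.2)‖ * ‖ω p.2.2‖))
      (volume.prod (volume.prod volume)) := by
  have hKm := KK_meas
  have hcm := hc.measurable
  have hm : AEStronglyMeasurable (fun p : E3 × (E3 × E3) =>
      (‖KK (p.1 - p.2.1)‖ * ‖ω p.2.1‖) * (‖KK (p.1 - p.2.2)‖ * ‖ω p.2.2‖))
      (volume.prod (volume.prod volume)) := by
    apply Measurable.aestronglyMeasurable
    fun_prop
  rw [integrable_prod_iff hm]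
  constructor
  · exact .of_forall fun x => (Kw_int ω hc hs x).mul_prod (Kw_int ω hc hs x)
  · obtain ⟨C, hC⟩ := Kw_bound ω hc hs
    have hJ : Integrable (fun x : E3 => C ^ 2 * (1 + ‖x‖ ^ 2) ^ (-(4:ℝ) / 2)) :=
      (integrable_rpow_neg_one_add_norm_sq (by simp; norm_num)).const_mul _
    refine hJ.mono' hm.norm.integral_prod_right' (.of_forall fun x => ?_)
    have e : ∫ p : E3 × E3, ‖(‖KK (x - p.1)‖ * ‖ω p.1‖) * (‖KK (x - p.2)‖ * ‖ω p.2‖)‖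
        ∂(volume.prod volume) = (∫ y, ‖KK (x - y)‖ * ‖ω y‖) ^ 2 := by
      rw [sq, ← integral_prod_mul]
      refine integral_congr_ae (.of_forall fun p => ?_)
      exact Real.norm_of_nonneg (by positivity)
    rw [e, Real.norm_of_nonneg (by positivity)]
    have h0 : 0 ≤ ∫ y, ‖KK (x - y)‖ * ‖ω y‖ := integral_nonneg fun y => by positivity
    calc _ ≤ (C * (1 + ‖x‖ ^ 2)⁻¹) ^ 2 := by gcongr; exact hC x
      _ = _ := by
        rw [mul_pow, show (-(4:ℝ) / 2) = -((2:ℕ):ℝ) by norm_num,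
          Real.rpow_neg (by positivity), Real.rpow_natCast, inv_pow]

/-- regularised kernel -/
lemma phi_deriv (x z : E3) (ε : ℝ) (hε : 0 < ε) :
    HasFDerivAt (fun z : E3 => (√(‖x - z‖ ^ 2 + ε))⁻¹)
      (((√(‖x - z‖ ^ 2 + ε)) ^ 3)⁻¹ • (innerSL ℝ (x - z))) z := by
  have h0 : HasFDerivAt (fun z : E3 => x - z) (-ContinuousLinearMap.id ℝ E3) z :=
    (hasFDerivAt_id z).const_sub x
  have h1 := (h0.norm_sq).add_const ε
  have hp : 0 < ‖x - z‖ ^ 2 + ε := by positivity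
  have hp2 : 0 < √(‖x - z‖ ^ 2 + ε) := Real.sqrt_pos.2 hp
  have h2 := (hasDerivAt_inv hp2.ne').comp_hasFDerivAt z (h1.sqrt hp.ne')
  convert! h2 using 1
  ext v
  simp
  field_simp
  ring

lemma div_int (ω : E3 → E3) (hω : ContDiff ℝ (⊤ : ℕ∞) ω) (hs : HasCompactSupport ω)
    (hdiv : ∀ x, div3 ω x = 0) (x : E3) (ε : ℝ) (hε : 0 < ε) :
    ∫ z, ((√(‖x - z‖ ^ 2 + ε)) ^ 3)⁻¹ * (inner ℝ (x - z) (ω z) : ℝ) = 0 := by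
  have hc := hω.continuous
  have hp : ∀ z, 0 < ‖x - z‖ ^ 2 + ε := fun z => by positivity
  have hp2 : ∀ z, √(‖x - z‖ ^ 2 + ε) ≠ 0 := fun z => (Real.sqrt_pos.2 (hp z)).ne'
  have hphi : Continuous (fun z : E3 => (√(‖x - z‖ ^ 2 + ε))⁻¹) :=
    Continuous.inv₀ (by fun_prop) hp2
  have hphi3 : Continuous (fun z : E3 => (√(‖x - z‖ ^ 2 + ε) ^ 3)⁻¹) :=
    Continuous.inv₀ (by fun_prop) (fun z => pow_ne_zero 3 (hp2 z))
  have hd : ∀ (i : Fin 3) z, HasFDerivAt (fun z => ω z i)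
      ((EuclideanSpace.proj i : E3 →L[ℝ] ℝ).comp (fderiv ℝ ω z)) z := fun i z =>
    (EuclideanSpace.proj i : E3 →L[ℝ] ℝ).hasFDerivAt.comp z
      ((hω.differentiable (by simp)) z).hasFDerivAt
  have hdc : Continuous (fderiv ℝ ω) := hω.continuous_fderiv (by simp)
  have hsd : HasCompactSupport (fderiv ℝ ω) := hs.fderiv ℝ
  have hI1 : ∀ i : Fin 3, Integrable (fun z => (√(‖x - z‖ ^ 2 + ε))⁻¹ *
      (fderiv ℝ ω z (EuclideanSpace.single i (1 : ℝ)) i)) := by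
    intro i
    apply Continuous.integrable_of_hasCompactSupport
    · apply hphi.mul
      fun_prop
    · apply hsd.mono'
      refine subset_trans ?_ (subset_tsupport _)
      intro z hz h
      apply hz
      simp [h]
  have hI2 : ∀ i : Fin 3, Integrable (fun z => ((√(‖x - z‖ ^ 2 + ε) ^ 3)⁻¹ *
      (inner ℝ (x - z) (EuclideanSpace.single i (1 : ℝ)) : ℝ)) * (ω z i)) := by
    intro i
    apply Continuous.integrable_of_hasCompactSupport
    · exact (hphi3.mul (by fun_prop)).mul (by fun_prop)
    · apply hs.mono'
      refine subset_trans ?_ (subset_tsupport _)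
      intro z hz h
      apply hz
      simp [h]
  have hI3 : ∀ i : Fin 3, Integrable (fun z => (√(‖x - z‖ ^ 2 + ε))⁻¹ * (ω z i)) := by
    intro i
    apply Continuous.integrable_of_hasCompactSupport
    · exact hphi.mul (by fun_prop)
    · apply hs.mono'
      refine subset_trans ?_ (subset_tsupport _)
      intro z hz h
      apply hz
      simp [h]
  have hi : ∀ i : Fin 3, ∫ z, (√(‖x - z‖ ^ 2 + ε))⁻¹ *
      (fderiv ℝ ω z (EuclideanSpace.single i (1 : ℝ)) i) =
      - ∫ z, ((√(‖x - z‖ ^ 2 + ε) ^ 3)⁻¹ *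
      (inner ℝ (x - z) (EuclideanSpace.single i (1 : ℝ)) : ℝ)) * (ω z i) := by
    intro i
    have := integral_mul_fderiv_eq_neg_fderiv_mul_of_integrable (μ := (volume : Measure E3))
      (f := fun z => (√(‖x - z‖ ^ 2 + ε))⁻¹) (g := fun z => ω z i)
      (v := EuclideanSpace.single i (1 : ℝ))
    simp only [fun z => (phi_deriv x z ε hε).fderiv, fun z => (hd i z).fderiv] at this
    exact this (hI2 i) (hI1 i) (hI3 i) (fun z _ => (phi_deriv x z ε hε).differentiableAt)
      (fun z _ => (hd i z).differentiableAt)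
  have hsum := congrArg (fun f : Fin 3 → ℝ => ∑ i, f i) (funext hi)
  simp only [Finset.sum_neg_distrib] at hsum
  rw [← integral_finsetSum _ (fun i _ => hI1 i), ← integral_finsetSum _ (fun i _ => hI2 i)] at hsum
  have l1 : ∀ z, ∑ i : Fin 3, (√(‖x - z‖ ^ 2 + ε))⁻¹ *
      (fderiv ℝ ω z (EuclideanSpace.single i (1 : ℝ)) i) = 0 := by
    intro z
    rw [← Finset.mul_sum]
    have := hdiv z
    unfold div3 at this
    rw [this, mul_zero]
  have l2 : ∀ z, ∑ i : Fin 3, ((√(‖x - z‖ ^ 2 + ε) ^ 3)⁻¹ *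
      (inner ℝ (x - z) (EuclideanSpace.single i (1 : ℝ)) : ℝ)) * (ω z i) =
      ((√(‖x - z‖ ^ 2 + ε)) ^ 3)⁻¹ * (inner ℝ (x - z) (ω z) : ℝ) := by
    intro z
    simp only [mul_assoc, ← Finset.mul_sum]
    congr 1
    simp [PiLp.inner_apply, Fin.sum_univ_three]
    ring
  simp only [l1, l2, integral_zero] at hsum
  linarith

lemma div_zero_int (ω : E3 → E3) (hω : ContDiff ℝ (⊤ : ℕ∞) ω) (hs : HasCompactSupport ω)
    (hdiv : ∀ x, div3 ω x = 0) (x : E3) :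
    ∫ z, (inner ℝ (KK (x - z)) (ω z) : ℝ) = 0 := by
  have hc := hω.continuous
  let e : ℕ → ℝ := fun n => 1 / ((n:ℝ) + 1)
  have he : ∀ n, 0 < e n := fun n => by positivity
  have hlim : Filter.Tendsto e Filter.atTop (nhds 0) := tendsto_one_div_add_atTop_nhds_zero_nat
  have key := tendsto_integral_of_dominated_convergence (μ := (volume : Measure E3))
    (F := fun n z => ((√(‖x - z‖ ^ 2 + e n)) ^ 3)⁻¹ * (inner ℝ (x - z) (ω z) : ℝ))
    (f := fun z => (inner ℝ (KK (x - z)) (ω z) : ℝ))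
    (fun y => ‖KK (x - y)‖ * ‖ω y‖) ?_ (Kw_int ω hc hs x) ?_ ?_
  · simp only [fun n => div_int ω hω hs hdiv x (e n) (he n)] at key
    exact (tendsto_nhds_unique key tendsto_const_nhds)
  · intro n
    have := hc.measurable
    apply Measurable.aestronglyMeasurable
    fun_prop
  · intro n
    refine .of_forall fun z => ?_
    rw [norm_mul, KK, norm_smul, mul_assoc]
    have h1 : ‖(inner ℝ (x - z) (ω z) : ℝ)‖ ≤ ‖x - z‖ * ‖ω z‖ := norm_inner_le_norm _ _
    by_cases h : x - z = 0
    · simp [h]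
    have h2 : 0 < ‖x - z‖ := norm_pos_iff.2 h
    have h3 : ‖x - z‖ ≤ √(‖x - z‖ ^ 2 + e n) := by
      apply Real.le_sqrt_of_sq_le
      linarith [he n]
    rw [Real.norm_of_nonneg (r := (√(‖x - z‖ ^ 2 + e n) ^ 3)⁻¹) (by positivity),
      Real.norm_of_nonneg (r := (‖x - z‖ ^ 3)⁻¹) (by positivity)]
    gcongr
  · have : ∀ᵐ z : E3, z ≠ x := by
      simp [ae_iff]
    filter_upwards [this] with z hz
    have h2 : 0 < ‖x - z‖ := norm_pos_iff.2 (sub_ne_zero.2 hz.symm)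
    rw [KK, inner_smul_left]
    simp only [conj_trivial]
    apply Filter.Tendsto.mul_const
    have : Filter.Tendsto (fun n => (√(‖x - z‖ ^ 2 + e n) ^ 3)⁻¹) Filter.atTop
        (nhds ((√(‖x - z‖ ^ 2 + 0) ^ 3)⁻¹)) := by
      apply Filter.Tendsto.inv₀
      · exact ((hlim.const_add _).sqrt).pow 3
      · rw [add_zero, Real.sqrt_sq h2.le]; positivity
    simpa [Real.sqrt_sq h2.le] using this

lemma cross3_norm_le (a b : E3) : ‖cross3 a b‖ ≤ ‖a‖ * ‖b‖ := by
  rw [← sq_le_sq₀ (norm_nonneg _) (by positivity)]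
  rw [mul_pow, EuclideanSpace.norm_sq_eq, EuclideanSpace.norm_sq_eq, EuclideanSpace.norm_sq_eq]
  simp [cross3, Fin.sum_univ_three]
  nlinarith [sq_nonneg (a 0 * b 0 + a 1 * b 1 + a 2 * b 2)]

lemma cross3_inner (a b c d : E3) : (inner ℝ (cross3 a b) (cross3 c d) : ℝ) =
    inner ℝ a c * inner ℝ b d - inner ℝ a d * inner ℝ c b := by
  simp [cross3, PiLp.inner_apply, Fin.sum_univ_three]
  ring

lemma cross3_smul (r : ℝ) (a b : E3) : r • cross3 a b = cross3 (r • a) b := by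
  ext i
  fin_cases i <;> simp [cross3] <;> ring

lemma cross3_meas {f g : E3 → E3} (hf : Measurable f) (hg : Measurable g) :
    Measurable (fun x => cross3 (f x) (g x)) := by
  have hc : Continuous (fun p : E3 × E3 => cross3 p.1 p.2) := by
    unfold cross3
    refine (PiLp.continuous_toLp 2 _).comp ?_
    refine continuous_pi fun i => ?_
    fin_cases i <;> simp <;> fun_prop
  exact hc.measurable.comp (hf.prodMk hg)

/-- **Kinetic energy of the Biot–Savart field.**
For a smooth, compactly supported, divergence-free `ω : ℝ³ → ℝ³` with Biot–Savart
velocity field `V`, the field `V` is square-integrable and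
`(1/2) ∫ ‖V(x)‖² dx = (1/8π) ∫∫ (ω(x) · ω(x′))/‖x - x′‖ dx′ dx`. -/
theorem biot_savart_kinetic_energy
    (ω : EuclideanSpace ℝ (Fin 3) → EuclideanSpace ℝ (Fin 3))
    (hω : ContDiff ℝ (⊤ : ℕ∞) ω) (hsupp : HasCompactSupport ω)
    (hdivω : ∀ x, div3 ω x = 0)
    (V : EuclideanSpace ℝ (Fin 3) → EuclideanSpace ℝ (Fin 3))
    (hV : ∀ x, V x = (-(4 * π)⁻¹ : ℝ) •
      ∫ x' : EuclideanSpace ℝ (Fin 3), (‖x - x'‖ ^ 3)⁻¹ • cross3 (x - x') (ω x')) :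
    Integrable (fun x : EuclideanSpace ℝ (Fin 3) => ‖V x‖ ^ 2) ∧
    (1 / 2) * (∫ x : EuclideanSpace ℝ (Fin 3), ‖V x‖ ^ 2)
      = (8 * π)⁻¹ * ∫ x : EuclideanSpace ℝ (Fin 3),
          ∫ x' : EuclideanSpace ℝ (Fin 3), (inner ℝ (ω x) (ω x') : ℝ) / ‖x - x'‖ := by
  have hc := hω.continuous
  have hcm := hc.measurable
  have hKm := KK_meas
  have hN := triple_int ω hc hsupp
  let μ : Measure (E3 × (E3 × E3)) := volume.prod (volume.prod volume)
  let P : E3 × (E3 × E3) → ℝ := fun p =>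
    inner ℝ (KK (p.1 - p.2.1)) (KK (p.1 - p.2.2)) * inner ℝ (ω p.2.1) (ω p.2.2)
  let Q : E3 × (E3 × E3) → ℝ := fun p =>
    inner ℝ (KK (p.1 - p.2.1)) (ω p.2.2) * inner ℝ (KK (p.1 - p.2.2)) (ω p.2.1)
  let Q' : E3 × (E3 × E3) → ℝ := fun p =>
    inner ℝ (KK (p.1 - p.2.1)) (ω p.2.1) * inner ℝ (KK (p.1 - p.2.2)) (ω p.2.2)
  have hP : Integrable P μ := by
    refine hN.mono' (Measurable.aestronglyMeasurable (by fun_prop)) (.of_forall fun p => ?_)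
    simp only [P, norm_mul]
    calc _ ≤ (‖KK (p.1 - p.2.1)‖ * ‖KK (p.1 - p.2.2)‖) * (‖ω p.2.1‖ * ‖ω p.2.2‖) := by
          gcongr <;> exact norm_inner_le_norm _ _
      _ = _ := by ring
  have hQ : Integrable Q μ := by
    refine hN.mono' (Measurable.aestronglyMeasurable (by fun_prop)) (.of_forall fun p => ?_)
    simp only [Q, norm_mul]
    calc _ ≤ (‖KK (p.1 - p.2.1)‖ * ‖ω p.2.2‖) * (‖KK (p.1 - p.2.2)‖ * ‖ω p.2.1‖) := by
          gcongr <;> exact norm_inner_le_norm _ _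
      _ = _ := by ring
  have hQ' : Integrable Q' μ := by
    refine hN.mono' (Measurable.aestronglyMeasurable (by fun_prop)) (.of_forall fun p => ?_)
    simp only [Q', norm_mul]
    gcongr <;> exact norm_inner_le_norm _ _
  have hPQ : Integrable (fun p => P p - Q p) μ := hP.sub hQ
  -- the square of V
  have hVi : ∀ x, Integrable (fun y => cross3 (KK (x - y)) (ω y)) := by
    intro x
    refine (Kw_int ω hc hsupp x).mono'
      (cross3_meas (by fun_prop) (by fun_prop)).aestronglyMeasurable
      (.of_forall fun y => cross3_norm_le _ _)
  have hVx : ∀ x, ‖V x‖ ^ 2 = ((4 * π)⁻¹) ^ 2 *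
      ∫ q : E3 × E3, (P (x, q) - Q (x, q)) ∂(volume.prod volume) := by
    intro x
    rw [hV x, norm_smul, mul_pow, norm_neg, Real.norm_of_nonneg (by positivity)]
    congr 1
    simp only [cross3_smul]
    change ‖∫ y, cross3 (KK (x - y)) (ω y)‖ ^ 2 = _
    rw [← real_inner_self_eq_norm_sq]
    have h1 : ∀ q : E3 × E3, P (x, q) - Q (x, q) =
        inner ℝ (cross3 (KK (x - q.1)) (ω q.1)) (cross3 (KK (x - q.2)) (ω q.2)) := by
      intro q
      rw [cross3_inner]
    have hi : Integrable (fun q : E3 × E3 => P (x, q) - Q (x, q)) (volume.prod volume) := by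
      simp only [h1]
      refine ((Kw_int ω hc hsupp x).mul_prod (Kw_int ω hc hsupp x)).mono' ?_
        (.of_forall fun q => ?_)
      · simp only [← h1]
        exact Measurable.aestronglyMeasurable (by fun_prop)
      · refine (norm_inner_le_norm _ _).trans ?_
        gcongr <;> exact cross3_norm_le _ _
    rw [integral_prod _ hi]
    simp only [h1]
    simp only [integral_inner (hVi x)]
    rw [← integral_inner (hVi x)]
    simp only [real_inner_comm]
  have hVint : Integrable (fun x => ‖V x‖ ^ 2) := by
    simp only [hVx]
    exact hPQ.integral_prod_left.const_mul _
  refine ⟨hVint, ?_⟩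
  have e1 : ∫ x, ‖V x‖ ^ 2 = ((4 * π)⁻¹) ^ 2 * (∫ p, P p ∂μ - ∫ p, Q p ∂μ) := by
    simp only [hVx]
    rw [integral_const_mul, ← integral_sub hP hQ, integral_prod _ hPQ]
  have e2 : ∫ p, Q' p ∂μ = 0 := by
    rw [integral_prod _ hQ']
    have : ∀ x, ∫ q, Q' (x, q) ∂(volume.prod volume) = 0 := by
      intro x
      have := integral_prod_mul (μ := (volume : Measure E3)) (ν := (volume : Measure E3))
        (fun y => (inner ℝ (KK (x - y)) (ω y) : ℝ)) (fun y => (inner ℝ (KK (x - y)) (ω y) : ℝ))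
      rw [div_zero_int ω hω hsupp hdivω x, zero_mul] at this
      exact this
    simp only [this, integral_zero]
  have e3 : ∫ p, Q p ∂μ = 0 := by
    rw [← e2, integral_prod_symm _ hQ, integral_prod_symm _ hQ']
    congr 1
    funext q
    rw [← integral_sub_left_eq_self (fun x => Q (x, q)) volume (q.1 + q.2)]
    congr 1
    funext x
    simp only [Q, Q']
    rw [show q.1 + q.2 - x - q.1 = -(x - q.2) by abel,
      show q.1 + q.2 - x - q.2 = -(x - q.1) by abel, KK_neg, KK_neg, inner_neg_left,
      inner_neg_left]
    ring
  have hae : ∀ᵐ q : E3 × E3 ∂(volume.prod volume), ∫ x, P (x, q) =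
      4 * π * ((inner ℝ (ω q.1) (ω q.2) : ℝ) / ‖q.1 - q.2‖) := by
    have hne : ∀ᵐ q : E3 × E3 ∂(volume.prod volume), q.1 ≠ q.2 := by
      have hms : MeasurableSet {q : E3 × E3 | q.1 ≠ q.2} :=
        (measurableSet_eq_fun measurable_fst measurable_snd).compl
      rw [Measure.ae_prod_iff_ae_ae hms]
      refine .of_forall fun y => ?_
      simp [ae_iff]
    filter_upwards [hP.prod_left_ae, hne] with q hq hqn
    by_cases h0 : (inner ℝ (ω q.1) (ω q.2) : ℝ) = 0
    · simp [P, h0]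
    have hq2 : Integrable (fun x => (inner ℝ (KK (x - q.1)) (KK (x - q.2)) : ℝ)) := by
      have := hq.mul_const (inner ℝ (ω q.1) (ω q.2) : ℝ)⁻¹
      simpa [P, mul_assoc, h0] using this
    have hs : ∀ x : E3, x + q.1 - q.2 = x + (q.1 - q.2) := fun x => by abel
    have hq3 := hq2.comp_add_right q.1
    simp only [add_sub_cancel_right, hs] at hq3
    have := KK_int (q.1 - q.2) (sub_ne_zero.2 hqn) hq3
    have h4 := integral_add_right_eq_self (μ := (volume : Measure E3))
      (fun x => (inner ℝ (KK (x - q.1)) (KK (x - q.2)) : ℝ)) q.1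
    simp only [add_sub_cancel_right, hs] at h4
    simp only [P]
    rw [integral_mul_const, ← h4, this]
    ring
  have hI : Integrable (fun q : E3 × E3 =>
      4 * π * ((inner ℝ (ω q.1) (ω q.2) : ℝ) / ‖q.1 - q.2‖)) (volume.prod volume) :=
    hP.integral_prod_right.congr hae
  have e4 : ∫ p, P p ∂μ = 4 * π * ∫ x : E3, ∫ x' : E3, (inner ℝ (ω x) (ω x') : ℝ) / ‖x - x'‖ := by
    rw [integral_prod_symm _ hP, integral_congr_ae hae, integral_prod _ hI]
    simp only [integral_const_mul]
  rw [e1, e3, e4]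
  have := Real.pi_pos
  field_simp
  ring
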